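/- In the setting and with the conclusion of the Shift Theorem (so K is Noetherian, n_0 ∈ ℕ and the nonzero element h ∈ A_{n_0}/I_{n_0} are chosen such that, with B'_n := (A_{n_0+n}/I_{n_0+n})[1/h], for every n ≥ 1 the natural B'_0-algebra map from the n-fold tensor power of B'_1 over B'_0 to B'_n is an isomorphism), there exists a nonzero element h' ∈ B'_0 such that, setting B''_n := B'_n[1/h'] (localization at the image of h'), the following hold: (1) for every n ≥ 1 the natural B''_0-algebra homomorphism from the n-fold tensor power of B''_1 over B''_0 to B''_n is an isomorphism; (2) B''_0 is an integral domain; and (3) for every n, every minimal prime ideal P of B''_n contracts to the zero ideal of B''_0 along the structure map B''_0 → B''_n. -/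

import Mathlib

open MvPolynomial
open scoped TensorProduct

namespace WideMatrixShift

variable (K : Type) [CommRing K] (c : ℕ)
variable (I : ∀ n : ℕ, Ideal (MvPolynomial (Fin c × Fin n) K))

/-- The quotient `A_n / I_n`. -/
def Qu (n : ℕ) : Type := MvPolynomial (Fin c × Fin n) K ⧸ I n

noncomputable instance (n : ℕ) : CommRing (Qu K c I n) :=
  inferInstanceAs (CommRing (MvPolynomial (Fin c × Fin n) K ⧸ I n))

/-- The property that every injection `[m] → [n]` maps `I m` into `I n`. -/
def ChainMap : Prop := ∀ (m n : ℕ) (π : Fin m → Fin n), Function.Injective π →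
  Ideal.map ((rename (Prod.map (id : Fin c → Fin c) π)).toRingHom) (I m) ≤ I n

/-- The homomorphism `A_m/I_m → A_n/I_n` induced by an injection `π : [m] → [n]`. -/
noncomputable def ind (hmap : ChainMap K c I) (m n : ℕ) (π : Fin m → Fin n)
    (hπ : Function.Injective π) : Qu K c I m →+* Qu K c I n :=
  Ideal.quotientMap (I n) ((rename (Prod.map (id : Fin c → Fin c) π)).toRingHom)
    (Ideal.map_le_iff_le_comap.mp (hmap m n π hπ))

theorem castAdd_inj (m n : ℕ) : Function.Injective (Fin.castAdd n : Fin m → Fin (m + n)) := by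
  intro x y hxy
  apply Fin.ext
  simpa using congrArg Fin.val hxy

theorem ind_ind (hmap : ChainMap K c I) (l m n : ℕ) (π : Fin m → Fin n)
    (π' : Fin l → Fin m) (ρ : Fin l → Fin n) (hπ : Function.Injective π)
    (hπ' : Function.Injective π') (hρ : Function.Injective ρ)
    (hcomp : π ∘ π' = ρ) (x : Qu K c I l) :
    ind K c I hmap m n π hπ (ind K c I hmap l m π' hπ' x)
      = ind K c I hmap l n ρ hρ x := by
  subst hcomp
  obtain ⟨y, rfl⟩ := Ideal.Quotient.mk_surjective
    (I := I l) (x : MvPolynomial (Fin c × Fin l) K ⧸ I l)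
  show Ideal.quotientMap _ _ _ (Ideal.quotientMap _ _ _ (Ideal.Quotient.mk _ y)) = _
  simp only [Ideal.quotientMap_mk, AlgHom.toRingHom_eq_coe, RingHom.coe_coe]
  rw [rename_rename]
  rfl

/-- The injection `[n₀+1] → [n₀+n]` fixing `[n₀]` and sending `n₀+1` to `n₀+j`. -/
def iotaJ (n₀ n : ℕ) (j : Fin n) : Fin (n₀ + 1) → Fin (n₀ + n) :=
  fun i => if h : (i : ℕ) < n₀ then ⟨(i : ℕ), lt_of_lt_of_le h (Nat.le_add_right _ _)⟩
    else ⟨n₀ + (j : ℕ), Nat.add_lt_add_left j.isLt n₀⟩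

theorem iotaJ_inj (n₀ n : ℕ) (j : Fin n) : Function.Injective (iotaJ n₀ n j) := by
  intro a b hab
  have ha := a.isLt
  have hb := b.isLt
  simp only [iotaJ] at hab
  split_ifs at hab with h1 h2 h2 <;>
    · apply Fin.ext
      have hv := congrArg Fin.val hab
      simp only at hv
      omega

variable (hmap : ChainMap K c I) (n₀ : ℕ) (h : Qu K c I n₀)

/-- The image of `h` in `A_{n₀+n}/I_{n₀+n}`. -/
noncomputable def hImg (n : ℕ) : Qu K c I (n₀ + n) :=
  ind K c I hmap n₀ (n₀ + n) (Fin.castAdd n) (castAdd_inj n₀ n) h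

/-- `B'_n = (A_{n₀+n}/I_{n₀+n})[1/h]`. -/
noncomputable abbrev Bp (n : ℕ) : Type := Localization.Away (hImg K c I hmap n₀ h n)

/-- The structure homomorphism `B'_0 = (A_{n₀}/I_{n₀})[1/h] → B'_n`. -/
noncomputable def structMap (n : ℕ) : Localization.Away h →+* Bp K c I hmap n₀ h n :=
  Localization.awayLift
    ((algebraMap (Qu K c I (n₀ + n)) (Bp K c I hmap n₀ h n)).comp
      (ind K c I hmap n₀ (n₀ + n) (Fin.castAdd n) (castAdd_inj n₀ n))) h
    (IsLocalization.map_units (Bp K c I hmap n₀ h n)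
      ⟨hImg K c I hmap n₀ h n, Submonoid.mem_powers _⟩)

theorem iotaJ_comp_castAdd (n₀ n : ℕ) (j : Fin n) :
    iotaJ n₀ n j ∘ (Fin.castAdd 1) = Fin.castAdd n := by
  funext i
  simp only [Function.comp_apply, iotaJ]
  rw [dif_pos (by simpa using i.isLt)]
  apply Fin.ext
  simp

theorem ind_iotaJ_hImg (n : ℕ) (j : Fin n) :
    ind K c I hmap (n₀ + 1) (n₀ + n) (iotaJ n₀ n j) (iotaJ_inj n₀ n j)
        (hImg K c I hmap n₀ h 1)
      = hImg K c I hmap n₀ h n := by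
  unfold hImg
  exact ind_ind K c I hmap n₀ (n₀ + 1) (n₀ + n) (iotaJ n₀ n j) (Fin.castAdd 1)
    (Fin.castAdd n) (iotaJ_inj n₀ n j) (castAdd_inj n₀ 1) (castAdd_inj n₀ n)
    (iotaJ_comp_castAdd n₀ n j) h

/-- The homomorphism `ι_j : B'_1 → B'_n` induced by the injection `[n₀+1] → [n₀+n]`
fixing `[n₀]` and sending `n₀+1` to `n₀+j`. -/
noncomputable def iotaLoc (n : ℕ) (j : Fin n) :
    Bp K c I hmap n₀ h 1 →+* Bp K c I hmap n₀ h n :=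
  Localization.awayLift
    ((algebraMap (Qu K c I (n₀ + n)) (Bp K c I hmap n₀ h n)).comp
      (ind K c I hmap (n₀ + 1) (n₀ + n) (iotaJ n₀ n j) (iotaJ_inj n₀ n j)))
    (hImg K c I hmap n₀ h 1)
    (by
      have hkey := ind_iotaJ_hImg K c I hmap n₀ h n j
      rw [RingHom.comp_apply, hkey]
      exact IsLocalization.map_units (Bp K c I hmap n₀ h n)
        ⟨hImg K c I hmap n₀ h n, Submonoid.mem_powers _⟩)

theorem iotaLoc_comp_structMap (n : ℕ) (j : Fin n) :
    (iotaLoc K c I hmap n₀ h n j).comp (structMap K c I hmap n₀ h 1)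
      = structMap K c I hmap n₀ h n := by
  apply IsLocalization.ringHom_ext (Submonoid.powers h)
  ext x
  have h1 : ∀ y : Qu K c I (n₀ + 1),
      iotaLoc K c I hmap n₀ h n j (algebraMap _ (Bp K c I hmap n₀ h 1) y)
        = algebraMap _ (Bp K c I hmap n₀ h n)
          (ind K c I hmap (n₀ + 1) (n₀ + n) (iotaJ n₀ n j) (iotaJ_inj n₀ n j) y) :=
    fun y => IsLocalization.Away.lift_eq (hImg K c I hmap n₀ h 1)
      (g := (algebraMap (Qu K c I (n₀ + n)) (Bp K c I hmap n₀ h n)).comp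
        (ind K c I hmap (n₀ + 1) (n₀ + n) (iotaJ n₀ n j) (iotaJ_inj n₀ n j)))
      (by
        rw [RingHom.comp_apply, ind_iotaJ_hImg K c I hmap n₀ h n j]
        exact IsLocalization.map_units (Bp K c I hmap n₀ h n)
          ⟨hImg K c I hmap n₀ h n, Submonoid.mem_powers _⟩) y
  have h2 : ∀ m : ℕ, structMap K c I hmap n₀ h m (algebraMap _ (Localization.Away h) x)
        = algebraMap _ (Bp K c I hmap n₀ h m)
          (ind K c I hmap n₀ (n₀ + m) (Fin.castAdd m) (castAdd_inj n₀ m) x) :=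
    fun m => IsLocalization.Away.lift_eq h
      (g := (algebraMap (Qu K c I (n₀ + m)) (Bp K c I hmap n₀ h m)).comp
        (ind K c I hmap n₀ (n₀ + m) (Fin.castAdd m) (castAdd_inj n₀ m)))
      (IsLocalization.map_units (Bp K c I hmap n₀ h m)
        ⟨hImg K c I hmap n₀ h m, Submonoid.mem_powers _⟩) x
  simp only [RingHom.coe_comp, Function.comp_apply]
  rw [h2, h2, h1]
  rw [ind_ind K c I hmap n₀ (n₀ + 1) (n₀ + n) (iotaJ n₀ n j) (Fin.castAdd 1)
    (Fin.castAdd n) (iotaJ_inj n₀ n j) (castAdd_inj n₀ 1) (castAdd_inj n₀ n)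
    (iotaJ_comp_castAdd n₀ n j) x]

variable (h' : Localization.Away h)

/-- `B''_0 = B'_0[1/h']`. -/
noncomputable def Bpp0 : Type := Localization.Away h'

noncomputable instance : CommRing (Bpp0 K c I n₀ h h') :=
  inferInstanceAs (CommRing (Localization.Away h'))

/-- `B''_n = B'_n[1/h']`, where `h'` is taken into `B'_n` via the structure map. -/
noncomputable def Bpp (n : ℕ) : Type :=
  Localization.Away (structMap K c I hmap n₀ h n h')

noncomputable instance (n : ℕ) : CommRing (Bpp K c I hmap n₀ h h' n) :=
  inferInstanceAs (CommRing (Localization.Away (structMap K c I hmap n₀ h n h')))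

noncomputable instance (n : ℕ) :
    Algebra (Bp K c I hmap n₀ h n) (Bpp K c I hmap n₀ h h' n) :=
  inferInstanceAs (Algebra _ (Localization.Away (structMap K c I hmap n₀ h n h')))

noncomputable instance (n : ℕ) :
    IsLocalization (Submonoid.powers (structMap K c I hmap n₀ h n h'))
      (Bpp K c I hmap n₀ h h' n) :=
  inferInstanceAs
    (IsLocalization (Submonoid.powers (structMap K c I hmap n₀ h n h'))
      (Localization.Away (structMap K c I hmap n₀ h n h')))

/-- The structure homomorphism `B''_0 = B'_0[1/h'] → B''_n`. -/
noncomputable def structMap₂ (n : ℕ) :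
    Bpp0 K c I n₀ h h' →+* Bpp K c I hmap n₀ h h' n :=
  Localization.awayLift
    ((algebraMap (Bp K c I hmap n₀ h n) (Bpp K c I hmap n₀ h h' n)).comp
      (structMap K c I hmap n₀ h n)) h'
    (by
      rw [RingHom.comp_apply]
      exact IsLocalization.map_units (Bpp K c I hmap n₀ h h' n)
        ⟨structMap K c I hmap n₀ h n h', Submonoid.mem_powers _⟩)

/-- The homomorphism `ι''_j : B''_1 → B''_n` induced by `ι_j : B'_1 → B'_n`. -/
noncomputable def iotaLoc₂ (n : ℕ) (j : Fin n) :
    Bpp K c I hmap n₀ h h' 1 →+* Bpp K c I hmap n₀ h h' n :=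
  Localization.awayLift
    ((algebraMap (Bp K c I hmap n₀ h n) (Bpp K c I hmap n₀ h h' n)).comp
      (iotaLoc K c I hmap n₀ h n j)) (structMap K c I hmap n₀ h 1 h')
    (by
      have hc := RingHom.congr_fun (iotaLoc_comp_structMap K c I hmap n₀ h n j) h'
      rw [RingHom.comp_apply] at hc
      rw [RingHom.comp_apply, hc]
      exact IsLocalization.map_units (Bpp K c I hmap n₀ h h' n)
        ⟨structMap K c I hmap n₀ h n h', Submonoid.mem_powers _⟩)

end WideMatrixShift

/-!
Write `R = B'_0`, a nonzero reduced Noetherian ring, and `B = B'_1`, an `R`-algebra of finite type.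
Inverting an element whose annihilator is an associated prime turns `R` into a domain. Generic
freeness then gives a further localization over which `B` is free: present `B` as `R[X] / J`, choose
finitely many members of `J` whose leading exponents lie below all others (Dickson's lemma), and
invert their leading coefficients; division with remainder shows that the standard monomials form a
basis of the quotient.

Let `h'` be the element inverted. Tensor powers commute with base change, so `B''_n` is the `n`-th
tensor power of `B''_1` over the domain `B''_0`, for `n = 0` too because `B'_0 → B'_n` is then an
isomorphism. Hence `B''_n` is free over `B''_0`, and nonzero elements of `B''_0` act on it as
nonzerodivisors, which lie in no minimal prime.
-/

section Division

variable {σ S : Type*} [CommRing S] (m : MonomialOrder σ) (J : Ideal (MvPolynomial σ S))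

/-- The exponents divisible by the leading exponent of no member of `J` with invertible leading
coefficient: the exponents of the standard monomials of Gröbner basis theory, over a ring. -/
def standardExponents : Set (σ →₀ ℕ) :=
  {e | ∀ b ∈ J, IsUnit (m.leadingCoeff b) → ¬ m.degree b ≤ e}

theorem codisjoint_restrictSupport_standardExponents :
    Codisjoint (J.restrictScalars S) (restrictSupport S (standardExponents m J)) := by
  refine codisjoint_iff_le_sup.mpr fun p _ => ?_
  obtain ⟨q, r, rfl, -, hr⟩ :=
    m.div_set (B := {b | b ∈ J ∧ IsUnit (m.leadingCoeff b)}) (fun b hb => hb.2) p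
  refine Submodule.add_mem_sup ?_ fun e he b hb hlc => hr e he b ⟨hb, hlc⟩
  exact J.sum_mem fun b _ => J.smul_mem _ b.2.1

variable {m J}

theorem disjoint_restrictSupport_standardExponents
    (hJ : ∀ p ∈ J, p ≠ 0 → ∃ b ∈ J, IsUnit (m.leadingCoeff b) ∧ m.degree b ≤ m.degree p) :
    Disjoint (J.restrictScalars S) (restrictSupport S (standardExponents m J)) := by
  refine Submodule.disjoint_def.mpr fun p hpJ hp => ?_
  by_contra hne
  obtain ⟨b, hb, hlc, hle⟩ := hJ p hpJ hne
  exact hp (m.degree_mem_support hne) b hb hlc hle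

theorem free_quotient_of_exists_isUnit_leadingCoeff
    (hJ : ∀ p ∈ J, p ≠ 0 → ∃ b ∈ J, IsUnit (m.leadingCoeff b) ∧ m.degree b ≤ m.degree p) :
    Module.Free S (MvPolynomial σ S ⧸ J) :=
  .of_basis <| (basisRestrictSupport S (standardExponents m J)).map <|
    (Submodule.quotientEquivOfIsCompl _ _ ⟨disjoint_restrictSupport_standardExponents hJ,
      codisjoint_restrictSupport_standardExponents m J⟩).symm.trans
        (Submodule.Quotient.restrictScalarsEquiv S J)

end Division

theorem exists_finite_subset_forall_exists_le {α : Type*} [PartialOrder α] [WellQuasiOrderedLE α]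
    (s : Set α) : ∃ t ⊆ s, t.Finite ∧ ∀ a ∈ s, ∃ b ∈ t, b ≤ a :=
  ⟨{b | Minimal (· ∈ s) b}, fun _ hb => hb.prop,
    WellQuasiOrderedLE.finite_of_isAntichain (setOfPred_minimal_antichain _),
    fun a ha => (exists_minimal_le_of_wellFoundedLT (· ∈ s) a ha).imp fun _ hb => ⟨hb.2, hb.1⟩⟩

section GenericFreeness

attribute [local instance] MvPolynomial.algebraMvPolynomial

variable {σ R : Type*} [CommRing R] (m : MonomialOrder σ)

theorem exists_finset_forall_exists_degree_le [Finite σ] (J : Ideal (MvPolynomial σ R)) :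
    ∃ G : Finset (MvPolynomial σ R), (∀ b ∈ G, b ∈ J ∧ b ≠ 0) ∧
      ∀ p ∈ J, p ≠ 0 → ∃ b ∈ G, m.degree b ≤ m.degree p := by
  classical
  obtain ⟨t, ht, htfin, hle⟩ :=
    exists_finite_subset_forall_exists_le (m.degree '' {p | p ∈ J ∧ p ≠ 0})
  lift t to Finset (σ →₀ ℕ) using htfin
  obtain ⟨G, hG, rfl⟩ := Finset.subset_set_image_iff.mp ht
  refine ⟨G, fun b hb => hG hb, fun p hp hne => ?_⟩
  simpa using hle _ ⟨p, ⟨hp, hne⟩, rfl⟩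

variable {m}

theorem degree_map_of_injective {S : Type*} [CommRing S] {φ : R →+* S}
    (hφ : Function.Injective φ) (p : MvPolynomial σ R) :
    m.degree (map φ p) = m.degree p := by
  simp only [MonomialOrder.degree, support_map_of_injective p hφ]

theorem leadingCoeff_map_of_injective {S : Type*} [CommRing S] {φ : R →+* S}
    (hφ : Function.Injective φ) (p : MvPolynomial σ R) :
    m.leadingCoeff (map φ p) = φ (m.leadingCoeff p) := by
  simp only [MonomialOrder.leadingCoeff, degree_map_of_injective hφ, coeff_map]

theorem free_quotient_map_of_isLocalization {J : Ideal (MvPolynomial σ R)} {M : Submonoid R}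
    (hM : M ≤ nonZeroDivisors R) (S : Type*) [CommRing S] [Algebra R S] [IsLocalization M S]
    (hJ : ∀ p ∈ J, p ≠ 0 →
      ∃ b ∈ J, IsUnit (algebraMap R S (m.leadingCoeff b)) ∧ m.degree b ≤ m.degree p) :
    Module.Free S (MvPolynomial σ S ⧸ J.map (map (algebraMap R S))) := by
  have hinj := IsLocalization.injective S hM
  refine free_quotient_of_exists_isUnit_leadingCoeff (m := m) fun p hp hne => ?_
  obtain ⟨⟨⟨q, hq⟩, ⟨_, u, hu, rfl⟩⟩, hpq⟩ :=
    (IsLocalization.mem_map_algebraMap_iff (M.map C) (MvPolynomial σ S)).mp hp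
  have hunit : IsUnit (algebraMap R S u) := IsLocalization.map_units S ⟨u, hu⟩
  replace hpq : algebraMap R S u • p = map (algebraMap R S) q := by
    rw [smul_eq_C_mul, mul_comm, ← map_C]
    exact hpq
  have hdeg : m.degree q = m.degree p := by
    rw [← degree_map_of_injective hinj, ← hpq, m.degree_smul_of_isRegular hunit.isRegular]
  have hq0 : q ≠ 0 := by
    rintro rfl
    exact hne (hunit.smul_eq_zero.mp (hpq.trans (map_zero _)))
  obtain ⟨b, hb, hlc, hle⟩ := hJ q hq hq0
  refine ⟨map (algebraMap R S) b, Ideal.mem_map_of_mem _ hb, ?_, ?_⟩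
  · rwa [leadingCoeff_map_of_injective hinj]
  · rwa [degree_map_of_injective hinj, ← hdeg]

theorem exists_free_quotient_map_localizationAway [Finite σ] [IsDomain R]
    (J : Ideal (MvPolynomial σ R)) :
    ∃ f : R, f ≠ 0 ∧ Module.Free (Localization.Away f)
      (MvPolynomial σ (Localization.Away f) ⧸
        J.map (map (algebraMap R (Localization.Away f)))) := by
  obtain ⟨_, _⟩ := exists_wellFoundedLT σ
  let m : MonomialOrder σ := MonomialOrder.lex
  obtain ⟨G, hG, hle⟩ := exists_finset_forall_exists_degree_le m J
  have hlc : ∏ b ∈ G, m.leadingCoeff b ≠ 0 :=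
    Finset.prod_ne_zero_iff.mpr fun b hb => m.leadingCoeff_ne_zero_iff.mpr (hG b hb).2
  refine ⟨_, hlc, free_quotient_map_of_isLocalization (m := m)
    (powers_le_nonZeroDivisors_of_noZeroDivisors hlc) _ fun p hp hne => ?_⟩
  obtain ⟨b, hb, hdeg⟩ := hle p hp hne
  exact ⟨b, (hG b hb).1, isUnit_of_dvd_unit (map_dvd _ (Finset.dvd_prod_of_mem _ hb))
    (IsLocalization.Away.algebraMap_isUnit _), hdeg⟩

/-- Base change along `R → S` of the algebra `R[X] / J` presented by an ideal `J`: it is presented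
by the extension of `J` to `S[X]`. -/
noncomputable def tensorQuotientEquivQuotientMap (S : Type*) [CommRing S] [Algebra R S]
    (J : Ideal (MvPolynomial σ R)) :
    S ⊗[R] (MvPolynomial σ R ⧸ J) ≃ₐ[S] MvPolynomial σ S ⧸ J.map (map (algebraMap R S)) :=
  (Algebra.TensorProduct.tensorQuotientEquiv (R := R) S (MvPolynomial σ R) S J).trans <|
    Ideal.quotientEquivAlg _ _ (algebraTensorAlgEquiv R S) <| by
      have hmap : map (σ := σ) (algebraMap R S) = (algebraTensorAlgEquiv R S).toRingHom.comp
          (Algebra.TensorProduct.includeRight (R := R)).toRingHom := by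
        ext <;> simp
      rw [hmap, ← Ideal.map_map]
      rfl

theorem exists_free_localizationAway_tensorProduct (R B : Type*) [CommRing R] [IsDomain R]
    [CommRing B] [Algebra R B] [Algebra.FiniteType R B] :
    ∃ f : R, f ≠ 0 ∧ Module.Free (Localization.Away f) (Localization.Away f ⊗[R] B) := by
  obtain ⟨n, φ, hφ⟩ := Algebra.FiniteType.iff_quotient_mvPolynomial''.mp
    (inferInstance : Algebra.FiniteType R B)
  obtain ⟨f, hf, hfree⟩ := exists_free_quotient_map_localizationAway (RingHom.ker φ)
  let S := Localization.Away f
  let e : S ⊗[R] (MvPolynomial (Fin n) R ⧸ RingHom.ker φ) ≃ₐ[S] S ⊗[R] B :=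
    Algebra.TensorProduct.congr .refl (Ideal.quotientKerAlgEquivOfSurjective hφ)
  exact ⟨f, hf,
    .of_equiv ((tensorQuotientEquivQuotientMap S (RingHom.ker φ)).symm.trans e).toLinearEquiv⟩

end GenericFreeness

section ReducedNoetherian

theorem exists_isDomain_localizationAway (R : Type*) [CommRing R] [IsNoetherianRing R]
    [IsReduced R] [Nontrivial R] :
    ∃ f : R, IsDomain (Localization.Away f) := by
  -- An associated prime `p` is the annihilator of some `r`, so inverting `r` makes `p` vanish.
  obtain ⟨p, hp⟩ := associatedPrimes.nonempty R R
  obtain ⟨hp, r, hr⟩ := isAssociatedPrime_iff.mp hp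
  have hmem (a : R) : a ∈ p ↔ a * r = 0 := by
    rw [hr, Submodule.mem_colon_singleton, smul_eq_mul, Submodule.mem_bot]
  have hrp : r ∉ p := fun h => hp.ne_top <| by
    rw [Ideal.eq_top_iff_one, hmem, one_mul]
    exact IsReduced.eq_zero r ⟨2, by rwa [sq, ← hmem]⟩
  have hprime : (p.map (algebraMap R (Localization.Away r))).IsPrime :=
    IsLocalization.isPrime_of_isPrime_disjoint (.powers r) _ p hp
      ((Ideal.disjoint_powers_iff_notMem_of_isPrime r).mpr hrp)
  have hbot : p.map (algebraMap R (Localization.Away r)) = ⊥ := by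
    rw [Ideal.map_eq_bot_iff_le_ker]
    exact fun a ha => (IsLocalization.map_eq_zero_iff (.powers r) _ a).mpr
      ⟨⟨r, Submonoid.mem_powers r⟩, by rw [mul_comm, ← hmem]; exact ha⟩
  rw [hbot] at hprime
  exact ⟨r, IsDomain.of_bot_isPrime _⟩

theorem free_tensorProduct_of_algHom {R B S T : Type*} [CommRing R] [CommRing B] [CommRing S]
    [CommRing T] [Algebra R B] [Algebra R S] [Algebra R T] (φ : S →ₐ[R] T)
    [Module.Free S (S ⊗[R] B)] : Module.Free T (T ⊗[R] B) := by
  let := φ.toAlgebra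
  have : IsScalarTower R S T := .of_algHom φ
  exact .of_equiv (TensorProduct.AlgebraTensorModule.cancelBaseChange R S T T B)

theorem exists_isDomain_and_free_localizationAway (R B : Type*) [CommRing R] [CommRing B]
    [Algebra R B] [IsNoetherianRing R] [IsReduced R] [Nontrivial R] [Algebra.FiniteType R B] :
    ∃ f : R, IsDomain (Localization.Away f) ∧
      Module.Free (Localization.Away f) (Localization.Away f ⊗[R] B) := by
  obtain ⟨r, hr⟩ := exists_isDomain_localizationAway R
  let R₁ := Localization.Away r
  obtain ⟨s, hs, hfree⟩ := exists_free_localizationAway_tensorProduct R₁ (R₁ ⊗[R] B)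
  let R₂ := Localization.Away s
  have : Module.Free R₂ (R₂ ⊗[R] B) :=
    .of_equiv (TensorProduct.AlgebraTensorModule.cancelBaseChange R R₁ R₂ R₂ B)
  have : IsDomain R₂ :=
    IsLocalization.isDomain_localization (powers_le_nonZeroDivisors_of_noZeroDivisors hs)
  let f := r * (IsLocalization.Away.sec r s).1
  have : IsLocalization.Away f R₂ := IsLocalization.Away.mul_of_associated (S := R₁) _ _ s
    (IsLocalization.Away.associated_sec_fst r s)
  let e : R₂ ≃ₐ[R] Localization.Away f := IsLocalization.algEquiv (.powers f) _ _
  exact ⟨f, e.symm.toMulEquiv.isDomain _, free_tensorProduct_of_algHom e.toAlgHom⟩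

end ReducedNoetherian

section Pushout

variable {R S C U W : Type*} [CommRing R] [CommRing S] [CommRing C] [CommRing U] [CommRing W]
  [Algebra R S] [Algebra R C] [Algebra R U] [Algebra C U] [Algebra S U]
  [IsScalarTower R C U] [IsScalarTower R S U] [Algebra.IsPushout R S C U]
  [Algebra R W] [Algebra S W] [IsScalarTower R S W]

variable (S U) in
/-- The `S`-algebra homomorphism out of the base change `U` of `C` that corresponds to an
`R`-algebra homomorphism out of `C`. -/
noncomputable def pushoutLift (f : C →ₐ[R] W) : U →ₐ[S] W :=
  (AlgHom.liftEquiv R S C W f).comp (Algebra.IsPushout.equiv R S C U).symm.toAlgHom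

theorem pushoutLift_algebraMap (f : C →ₐ[R] W) (c : C) :
    pushoutLift S U f (algebraMap C U c) = f c := by
  simp [pushoutLift, Algebra.IsPushout.equiv_symm_algebraMap_right]

theorem algHom_ext_of_isPushout (R C : Type*) {S U W : Type*} [CommRing R] [CommRing S] [CommRing C]
    [CommRing U] [CommRing W] [Algebra R S] [Algebra R C] [Algebra R U] [Algebra C U] [Algebra S U]
    [IsScalarTower R C U] [IsScalarTower R S U] [Algebra.IsPushout R S C U] [Algebra S W]
    {f g : U →ₐ[S] W} (hfg : ∀ c : C, f (algebraMap C U c) = g (algebraMap C U c)) : f = g := by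
  let := Algebra.compHom W (algebraMap R S)
  have : IsScalarTower R S W := .of_algebraMap_eq' rfl
  exact AlgHom.restrictScalars_injective R <| Algebra.IsPushout.algHom_ext U (R' := C) (S := S)
    (AlgHom.ext hfg) (AlgHom.ext fun s => by simp)

end Pushout

section FiniteTensorProduct

open PiTensorProduct

variable {ι R : Type*} [Fintype ι] [CommRing R] {A : ι → Type*} [∀ i, CommRing (A i)]
  [∀ i, Algebra R (A i)] {C : Type*} [CommRing C] [Algebra R C]

/-- The algebra homomorphism `⨂ xᵢ ↦ ∏ gᵢ xᵢ` out of a finite tensor product. -/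
noncomputable def prodAlgHom (g : ∀ i, A i →ₐ[R] C) : (⨂[R] i, A i) →ₐ[R] C :=
  liftAlgHom ((MultilinearMap.mkPiAlgebra R ι C).compLinearMap fun i => (g i).toLinearMap)
    (by simp) (by simp [Finset.prod_mul_distrib])

theorem prodAlgHom_tprod (g : ∀ i, A i →ₐ[R] C) (x : ∀ i, A i) :
    prodAlgHom g (tprod R x) = ∏ i, g i (x i) :=
  lift.tprod x

theorem prodAlgHom_singleAlgHom [DecidableEq ι] (g : ∀ i, A i →ₐ[R] C) (i : ι) (a : A i) :
    prodAlgHom g (singleAlgHom i a) = g i a := by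
  rw [singleAlgHom_apply, prodAlgHom_tprod, Finset.prod_eq_single i]
  · exact congrArg (g i) (Pi.mulSingle_eq_same i a)
  · intro j _ hj
    exact (congrArg (g j) (Pi.mulSingle_eq_of_ne hj a)).trans (map_one _)
  · exact fun hi => absurd (Finset.mem_univ i) hi

/-- The `R`-algebra `C` is the tensor product of the `A i` over `R` by means of the maps `g i`. The
existential form leaves the isomorphism implicit; it is necessarily `prodAlgHom g`. -/
def IsPiTensorProduct (g : ∀ i, A i →ₐ[R] C) : Prop :=
  ∃ Φ : (⨂[R] i, A i) →ₐ[R] C,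
    (∀ x, Φ (tprod R x) = ∏ i, g i (x i)) ∧ Function.Bijective Φ

namespace IsPiTensorProduct

variable {g : ∀ i, A i →ₐ[R] C}

theorem iff_bijective_prodAlgHom : IsPiTensorProduct g ↔ Function.Bijective (prodAlgHom g) := by
  refine ⟨?_, fun hg => ⟨prodAlgHom g, prodAlgHom_tprod g, hg⟩⟩
  rintro ⟨Φ, hΦ, hbij⟩
  suffices prodAlgHom g = Φ from this ▸ hbij
  refine AlgHom.toLinearMap_injective (PiTensorProduct.ext (MultilinearMap.ext fun x => ?_))
  exact (prodAlgHom_tprod g x).trans (hΦ x).symm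

theorem of_isEmpty [IsEmpty ι] (hC : Function.Bijective (algebraMap R C)) :
    IsPiTensorProduct g := by
  rw [iff_bijective_prodAlgHom]
  have hΦ : (prodAlgHom g).toLinearMap =
      (Algebra.linearMap R C).comp (isEmptyEquiv ι).toLinearMap :=
    PiTensorProduct.ext <| MultilinearMap.ext fun x => by simp [prodAlgHom_tprod]
  exact (congrArg DFunLike.coe hΦ).symm ▸ hC.comp (isEmptyEquiv ι).bijective

theorem free [∀ i, Module.Free R (A i)] (hg : IsPiTensorProduct g) : Module.Free R C := by
  obtain ⟨Φ, -, hΦ⟩ := hg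
  have : Module.Free R (⨂[R] i, A i) :=
    .of_basis (Basis.piTensorProduct fun i => Module.Free.chooseBasis R (A i))
  exact .of_equiv (LinearEquiv.ofBijective Φ.toLinearMap hΦ)

theorem baseChange {S : Type*} [CommRing S] [Algebra R S] {T : ι → Type*} [∀ i, CommRing (T i)]
    [∀ i, Algebra R (T i)] [∀ i, Algebra S (T i)] [∀ i, Algebra (A i) (T i)]
    [∀ i, IsScalarTower R (A i) (T i)] [∀ i, IsScalarTower R S (T i)]
    [∀ i, Algebra.IsPushout R S (A i) (T i)]
    {U : Type*} [CommRing U] [Algebra R U] [Algebra S U] [Algebra C U] [IsScalarTower R C U]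
    [IsScalarTower R S U] [Algebra.IsPushout R S C U] {k : ∀ i, T i →ₐ[S] U}
    (hk : ∀ i a, k i (algebraMap (A i) (T i) a) = algebraMap C U (g i a))
    (hg : IsPiTensorProduct g) : IsPiTensorProduct k := by
  classical
  rw [iff_bijective_prodAlgHom] at hg ⊢
  let e := AlgEquiv.ofBijective (prodAlgHom g) hg
  let α : (⨂[R] i, A i) →ₐ[R] ⨂[S] i, T i := prodAlgHom fun i =>
    ((singleAlgHom (R := S) i).restrictScalars R).comp (IsScalarTower.toAlgHom R (A i) (T i))
  let γ : U →ₐ[S] ⨂[S] i, T i := pushoutLift S U (α.comp e.symm.toAlgHom)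
  have hγ (z : ⨂[R] i, A i) : γ (algebraMap C U (prodAlgHom g z)) = α z :=
    (pushoutLift_algebraMap _ _).trans (congrArg α (e.symm_apply_apply z))
  have hα (i : ι) (a : A i) :
      α (singleAlgHom i a) = singleAlgHom i (algebraMap (A i) (T i) a) :=
    prodAlgHom_singleAlgHom _ i a
  have hleft : γ.comp (prodAlgHom k) = .id S _ :=
    PiTensorProduct.algHom_ext fun i => algHom_ext_of_isPushout R (A i) fun a => by
      change γ (prodAlgHom k (singleAlgHom i (algebraMap (A i) (T i) a))) = _
      rw [prodAlgHom_singleAlgHom, hk, ← prodAlgHom_singleAlgHom g, hγ, hα]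
      rfl
  have hkα : ((prodAlgHom k).restrictScalars R).comp α =
      (IsScalarTower.toAlgHom R C U).comp (prodAlgHom g) :=
    PiTensorProduct.algHom_ext fun i => AlgHom.ext fun a => by
      change prodAlgHom k (α (singleAlgHom i a)) = algebraMap C U (prodAlgHom g (singleAlgHom i a))
      rw [hα, prodAlgHom_singleAlgHom, prodAlgHom_singleAlgHom, hk]
  have hright : (prodAlgHom k).comp γ = .id S U :=
    algHom_ext_of_isPushout R C fun c => by
      obtain ⟨z, rfl⟩ := hg.2 c
      simpa [hγ] using DFunLike.congr_fun hkα z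
  exact Function.bijective_iff_has_inverse.mpr
    ⟨γ, DFunLike.congr_fun hleft, DFunLike.congr_fun hright⟩

end IsPiTensorProduct

end FiniteTensorProduct

theorem free_of_isPushout (R A : Type*) {S B : Type*} [CommRing R] [CommRing S] [CommRing A]
    [CommRing B] [Algebra R S] [Algebra R A] [Algebra R B] [Algebra A B] [Algebra S B]
    [IsScalarTower R A B] [IsScalarTower R S B] [Algebra.IsPushout R S A B]
    [Module.Free S (S ⊗[R] A)] : Module.Free S B :=
  .of_equiv (Algebra.IsPushout.equiv R S A B).toLinearEquiv

theorem comap_algebraMap_eq_bot_of_mem_minimalPrimes {S U : Type*} [CommRing S] [IsDomain S]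
    [CommRing U] [Algebra S U] [Module.IsTorsionFree S U] {P : Ideal U} (hP : P ∈ minimalPrimes U) :
    P.comap (algebraMap S U) = ⊥ := by
  refine (Submodule.eq_bot_iff _).mpr fun s hs => ?_
  by_contra hne
  refine Set.disjoint_left.mp (Ideal.disjoint_nonZeroDivisors_of_mem_minimalPrimes hP) hs ?_
  refine mem_nonZeroDivisors_iff_right.mpr fun x hx => ?_
  rw [mul_comm, ← Algebra.smul_def] at hx
  exact (smul_eq_zero.mp hx).resolve_left hne

theorem nontrivial_localizationAway {R : Type*} [CommRing R] [IsReduced R] {r : R} (hr : r ≠ 0) :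
    Nontrivial (Localization.Away r) := by
  rw [← not_subsingleton_iff_nontrivial, IsLocalization.subsingleton_iff (M := .powers r)]
  rintro ⟨k, hk⟩
  exact hr (IsReduced.eq_zero r ⟨k, hk⟩)

theorem ne_zero_of_isLocalizationAway {R S : Type*} [CommRing R] [CommRing S] [Algebra R S]
    [Nontrivial S] (r : R) [IsLocalization.Away r S] : r ≠ 0 := by
  rintro rfl
  exact not_isUnit_zero (map_zero (algebraMap R S) ▸ IsLocalization.Away.algebraMap_isUnit 0)

theorem bijective_of_comp_algebraMap {A B X Y : Type*} [CommRing A] [CommRing B] [CommRing X]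
    [CommRing Y] [Algebra A X] [Algebra B Y] {g : A →+* B} (hg : Function.Bijective g) (a : A)
    [IsLocalization.Away a X] [IsLocalization.Away (g a) Y] {f : X →+* Y}
    (hf : f.comp (algebraMap A X) = (algebraMap B Y).comp g) : Function.Bijective f := by
  let e := RingEquiv.ofBijective g hg
  have he : (Submonoid.powers a).map e.toMonoidHom = .powers (g a) := Submonoid.map_powers _ _
  have : f = (IsLocalization.ringEquivOfRingEquiv X Y e he : X →+* Y) := by
    refine IsLocalization.ringHom_ext (.powers a) (hf.trans (RingHom.ext fun x => ?_))
    simp [e]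
  exact this ▸ (IsLocalization.ringEquivOfRingEquiv X Y e he).bijective

namespace WideMatrixShift

variable (K : Type) [CommRing K] (c : ℕ) (I : ∀ n : ℕ, Ideal (MvPolynomial (Fin c × Fin n) K))

section Quotient

noncomputable instance (n : ℕ) : Algebra K (Qu K c I n) :=
  inferInstanceAs (Algebra K (MvPolynomial (Fin c × Fin n) K ⧸ I n))

instance (n : ℕ) : Algebra.FiniteType K (Qu K c I n) :=
  inferInstanceAs (Algebra.FiniteType K (MvPolynomial (Fin c × Fin n) K ⧸ I n))

instance [IsNoetherianRing K] (n : ℕ) : IsNoetherianRing (Qu K c I n) :=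
  inferInstanceAs (IsNoetherianRing (MvPolynomial (Fin c × Fin n) K ⧸ I n))

variable {K c I} in
theorem isReduced_Qu {n : ℕ} (hI : (I n).IsRadical) : IsReduced (Qu K c I n) :=
  (Ideal.isRadical_iff_quotient_reduced (I n)).mp hI

variable (hmap : ChainMap K c I)

theorem ind_comp_algebraMap {m n : ℕ} (π : Fin m → Fin n) (hπ : Function.Injective π) :
    (ind K c I hmap m n π hπ).comp (algebraMap K (Qu K c I m)) = algebraMap K (Qu K c I n) :=
  RingHom.ext fun a => congrArg (Ideal.Quotient.mk (I n)) (rename_C _ a)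

theorem ind_id (n : ℕ) : ind K c I hmap n n id Function.injective_id = .id (Qu K c I n) :=
  Ideal.Quotient.ringHom_ext <| RingHom.ext fun p =>
    congrArg (Ideal.Quotient.mk (I n)) <| by simp

end Quotient

variable (hmap : ChainMap K c I) (n₀ : ℕ) (h : Qu K c I n₀)

section Bp

noncomputable instance (n : ℕ) : Algebra (Localization.Away h) (Bp K c I hmap n₀ h n) :=
  (structMap K c I hmap n₀ h n).toAlgebra

theorem structMap_comp_algebraMap (n : ℕ) :
    (structMap K c I hmap n₀ h n).comp (algebraMap (Qu K c I n₀) (Localization.Away h)) =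
      (algebraMap (Qu K c I (n₀ + n)) (Bp K c I hmap n₀ h n)).comp
        (ind K c I hmap n₀ (n₀ + n) (Fin.castAdd n) (castAdd_inj n₀ n)) :=
  IsLocalization.lift_comp _

instance (n : ℕ) : IsScalarTower K (Localization.Away h) (Bp K c I hmap n₀ h n) :=
  .of_algebraMap_eq' <| calc
    algebraMap K (Bp K c I hmap n₀ h n)
      = (algebraMap (Qu K c I (n₀ + n)) _).comp (algebraMap K _) :=
        IsScalarTower.algebraMap_eq _ _ _
    _ = ((structMap K c I hmap n₀ h n).comp (algebraMap (Qu K c I n₀) _)).comp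
          (algebraMap K _) := by
        rw [structMap_comp_algebraMap, RingHom.comp_assoc, ind_comp_algebraMap]
    _ = (structMap K c I hmap n₀ h n).comp (algebraMap K _) := rfl

instance (n : ℕ) : Algebra.FiniteType (Localization.Away h) (Bp K c I hmap n₀ h n) :=
  have : Algebra.FiniteType (Qu K c I (n₀ + n)) (Bp K c I hmap n₀ h n) :=
    IsLocalization.finiteType_of_monoid_fg (.powers (hImg K c I hmap n₀ h n)) _
  have : Algebra.FiniteType K (Bp K c I hmap n₀ h n) :=
    .trans (S := Qu K c I (n₀ + n)) inferInstance ‹_›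
  .of_restrictScalars_finiteType K _ _

theorem structMap_zero_bijective : Function.Bijective (structMap K c I hmap n₀ h 0) := by
  have hind : Function.Bijective (ind K c I hmap n₀ (n₀ + 0) (Fin.castAdd 0) (castAdd_inj n₀ 0)) :=
    (ind_id K c I hmap n₀).symm ▸ Function.bijective_id
  have : IsLocalization.Away (ind K c I hmap n₀ (n₀ + 0) (Fin.castAdd 0) (castAdd_inj n₀ 0) h)
      (Bp K c I hmap n₀ h 0) :=
    inferInstanceAs (IsLocalization.Away (hImg K c I hmap n₀ h 0) (Bp K c I hmap n₀ h 0))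
  exact bijective_of_comp_algebraMap hind h (structMap_comp_algebraMap K c I hmap n₀ h 0)

/-- The map `ι_j : B'_1 → B'_n` as a homomorphism of `B'_0`-algebras. -/
noncomputable def iotaAlgHom (n : ℕ) (j : Fin n) :
    Bp K c I hmap n₀ h 1 →ₐ[Localization.Away h] Bp K c I hmap n₀ h n :=
  { iotaLoc K c I hmap n₀ h n j with
    commutes' := RingHom.congr_fun (iotaLoc_comp_structMap K c I hmap n₀ h n j) }

end Bp

section Bpp

variable (h' : Localization.Away h)

noncomputable instance : Algebra (Localization.Away h) (Bpp0 K c I n₀ h h') :=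
  inferInstanceAs (Algebra _ (Localization.Away h'))

instance : IsLocalization.Away h' (Bpp0 K c I n₀ h h') :=
  inferInstanceAs (IsLocalization.Away h' (Localization.Away h'))

noncomputable instance (n : ℕ) : Algebra (Bpp0 K c I n₀ h h') (Bpp K c I hmap n₀ h h' n) :=
  (structMap₂ K c I hmap n₀ h h' n).toAlgebra

noncomputable instance (n : ℕ) : Algebra (Localization.Away h) (Bpp K c I hmap n₀ h h' n) :=
  ((algebraMap (Bp K c I hmap n₀ h n) (Bpp K c I hmap n₀ h h' n)).comp
    (structMap K c I hmap n₀ h n)).toAlgebra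

instance (n : ℕ) :
    IsScalarTower (Localization.Away h) (Bp K c I hmap n₀ h n) (Bpp K c I hmap n₀ h h' n) :=
  .of_algebraMap_eq' rfl

theorem structMap₂_comp_algebraMap (n : ℕ) :
    (structMap₂ K c I hmap n₀ h h' n).comp (algebraMap _ (Bpp0 K c I n₀ h h')) =
      (algebraMap _ (Bpp K c I hmap n₀ h h' n)).comp (structMap K c I hmap n₀ h n) :=
  IsLocalization.Away.lift_comp (S := Bpp0 K c I n₀ h h') h'
    (IsLocalization.Away.algebraMap_isUnit (structMap K c I hmap n₀ h n h'))

instance (n : ℕ) :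
    IsScalarTower (Localization.Away h) (Bpp0 K c I n₀ h h') (Bpp K c I hmap n₀ h h' n) :=
  .of_algebraMap_eq' (structMap₂_comp_algebraMap K c I hmap n₀ h h' n).symm

instance (n : ℕ) : Algebra.IsPushout (Localization.Away h) (Bpp0 K c I n₀ h h')
    (Bp K c I hmap n₀ h n) (Bpp K c I hmap n₀ h h' n) :=
  have : IsLocalization (Algebra.algebraMapSubmonoid (Bp K c I hmap n₀ h n) (.powers h'))
      (Bpp K c I hmap n₀ h h' n) := by
    rw [Algebra.algebraMapSubmonoid_powers]
    exact inferInstanceAs (IsLocalization (.powers (structMap K c I hmap n₀ h n h')) _)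
  (Algebra.isPushout_of_isLocalization (.powers h') _ _ _).symm

theorem iotaLoc₂_comp_algebraMap (n : ℕ) (j : Fin n) :
    (iotaLoc₂ K c I hmap n₀ h h' n j).comp (algebraMap _ (Bpp K c I hmap n₀ h h' 1)) =
      (algebraMap _ (Bpp K c I hmap n₀ h h' n)).comp (iotaLoc K c I hmap n₀ h n j) := by
  have hunit : IsUnit (algebraMap _ (Bpp K c I hmap n₀ h h' n)
      (iotaLoc K c I hmap n₀ h n j (structMap K c I hmap n₀ h 1 h'))) := by
    rw [← RingHom.comp_apply (iotaLoc K c I hmap n₀ h n j), iotaLoc_comp_structMap]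
    exact IsLocalization.Away.algebraMap_isUnit (structMap K c I hmap n₀ h n h')
  exact IsLocalization.Away.lift_comp (S := Bpp K c I hmap n₀ h h' 1)
    (structMap K c I hmap n₀ h 1 h') hunit

theorem iotaLoc₂_comp_structMap₂ (n : ℕ) (j : Fin n) :
    (iotaLoc₂ K c I hmap n₀ h h' n j).comp (structMap₂ K c I hmap n₀ h h' 1) =
      structMap₂ K c I hmap n₀ h h' n := by
  refine IsLocalization.ringHom_ext (.powers h') ?_
  rw [RingHom.comp_assoc, structMap₂_comp_algebraMap, structMap₂_comp_algebraMap,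
    ← RingHom.comp_assoc, iotaLoc₂_comp_algebraMap, RingHom.comp_assoc, iotaLoc_comp_structMap]

/-- The map `ι''_j : B''_1 → B''_n` as a homomorphism of `B''_0`-algebras. -/
noncomputable def iotaAlgHom₂ (n : ℕ) (j : Fin n) :
    Bpp K c I hmap n₀ h h' 1 →ₐ[Bpp0 K c I n₀ h h'] Bpp K c I hmap n₀ h h' n :=
  { iotaLoc₂ K c I hmap n₀ h h' n j with
    commutes' := RingHom.congr_fun (iotaLoc₂_comp_structMap₂ K c I hmap n₀ h h' n j) }

end Bpp

end WideMatrixShift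

open WideMatrixShift in
theorem shift_theorem_strengthening_general {K : Type} [CommRing K] [IsNoetherianRing K] {c : ℕ}
    {I : ∀ n : ℕ, Ideal (MvPolynomial (Fin c × Fin n) K)} (hmap : ChainMap K c I) {n₀ : ℕ}
    (hrad : (I n₀).IsRadical) {h : Qu K c I n₀} (hh : h ≠ 0)
    (hiso : ∀ n, 1 ≤ n → IsPiTensorProduct (iotaAlgHom K c I hmap n₀ h n)) :
    ∃ h' : Localization.Away h, h' ≠ 0 ∧
      (∀ n, 1 ≤ n → IsPiTensorProduct (iotaAlgHom₂ K c I hmap n₀ h h' n)) ∧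
      IsDomain (Bpp0 K c I n₀ h h') ∧
      ∀ n, ∀ P ∈ minimalPrimes (Bpp K c I hmap n₀ h h' n),
        P.comap (structMap₂ K c I hmap n₀ h h' n) = ⊥ := by
  have := isReduced_Qu hrad
  have := nontrivial_localizationAway hh
  have hiso₀ (n : ℕ) : IsPiTensorProduct (iotaAlgHom K c I hmap n₀ h n) :=
    n.eq_zero_or_pos.elim
      (fun hn => hn ▸ .of_isEmpty (structMap_zero_bijective K c I hmap n₀ h)) (hiso n)
  obtain ⟨h', _, _⟩ : ∃ h' : Localization.Away h, IsDomain (Bpp0 K c I n₀ h h') ∧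
      Module.Free (Bpp0 K c I n₀ h h')
        (Bpp0 K c I n₀ h h' ⊗[Localization.Away h] Bp K c I hmap n₀ h 1) :=
    exists_isDomain_and_free_localizationAway _ _
  have : Module.Free (Bpp0 K c I n₀ h h') (Bpp K c I hmap n₀ h h' 1) :=
    free_of_isPushout (Localization.Away h) (Bp K c I hmap n₀ h 1)
  have htensor (n : ℕ) : IsPiTensorProduct (iotaAlgHom₂ K c I hmap n₀ h h' n) :=
    (hiso₀ n).baseChange fun j =>
      RingHom.congr_fun (iotaLoc₂_comp_algebraMap K c I hmap n₀ h h' n j)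
  refine ⟨h', ne_zero_of_isLocalizationAway (S := Bpp0 K c I n₀ h h') h', fun n _ => htensor n,
    inferInstance, fun n P hP => ?_⟩
  have := (htensor n).free
  exact comap_algebraMap_eq_bot_of_mem_minimalPrimes hP

open WideMatrixShift in
set_option synthInstance.maxHeartbeats 1000000 in
set_option maxHeartbeats 1000000 in
/-- Strengthening of the Shift Theorem (Proposition 3.3): in the setting and with the
conclusion of the Shift Theorem, there is moreover a nonzero `h' ∈ B'_0` such that, with
`B''_n := B'_n[1/h']`: (1) for every `n ≥ 1` the natural `B''_0`-algebra homomorphism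
from the `n`-fold tensor power of `B''_1` over `B''_0` to `B''_n` is an isomorphism;
(2) `B''_0` is an integral domain; and (3) every minimal prime of `B''_n` contracts to
the zero ideal of `B''_0`. -/
theorem shift_theorem_strengthening
    (K : Type) [CommRing K] [IsNoetherianRing K] (c : ℕ)
    (I : ∀ n : ℕ, Ideal (MvPolynomial (Fin c × Fin n) K))
    (hsym : ∀ (n : ℕ) (π : Equiv.Perm (Fin n)),
      Ideal.map (MvPolynomial.rename (Prod.map (id : Fin c → Fin c) π)) (I n) = I n)
    (hincl : ∀ n : ℕ,
      Ideal.map (MvPolynomial.rename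
          (Prod.map (id : Fin c → Fin c) (Fin.castSucc : Fin n → Fin (n + 1))))
        (I n) ≤ I (n + 1))
    (hmap : ChainMap K c I)
    (hrad : ∀ n : ℕ, (I n).IsRadical)
    (hinj : ∀ (m n : ℕ) (π : Fin m → Fin n) (hπ : Function.Injective π),
      Function.Injective (ind K c I hmap m n π hπ))
    (hne : I 0 ≠ ⊤)
    (n₀ : ℕ) (h : Qu K c I n₀) (hh : h ≠ 0)
    (hiso : ∀ n : ℕ, 1 ≤ n →
      letI : Algebra (Localization.Away h) (Bp K c I hmap n₀ h 1) :=
        (structMap K c I hmap n₀ h 1).toAlgebra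
      letI : Algebra (Localization.Away h) (Bp K c I hmap n₀ h n) :=
        (structMap K c I hmap n₀ h n).toAlgebra
      ∃ Φ : (⨂[Localization.Away h] _ : Fin n, Bp K c I hmap n₀ h 1)
          →ₐ[Localization.Away h] Bp K c I hmap n₀ h n,
        (∀ x : Fin n → Bp K c I hmap n₀ h 1,
          Φ (PiTensorProduct.tprod (Localization.Away h) x)
            = ∏ j : Fin n, iotaLoc K c I hmap n₀ h n j (x j)) ∧
        Function.Bijective Φ) :
    ∃ h' : Localization.Away h, h' ≠ 0 ∧
      (∀ n : ℕ, 1 ≤ n →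
        letI : Algebra (Bpp0 K c I n₀ h h') (Bpp K c I hmap n₀ h h' 1) :=
          (structMap₂ K c I hmap n₀ h h' 1).toAlgebra
        letI : Algebra (Bpp0 K c I n₀ h h') (Bpp K c I hmap n₀ h h' n) :=
          (structMap₂ K c I hmap n₀ h h' n).toAlgebra
        ∃ Ψ : (⨂[Bpp0 K c I n₀ h h'] _ : Fin n, Bpp K c I hmap n₀ h h' 1)
            →ₐ[Bpp0 K c I n₀ h h'] Bpp K c I hmap n₀ h h' n,
          (∀ x : Fin n → Bpp K c I hmap n₀ h h' 1,
            Ψ (PiTensorProduct.tprod (Bpp0 K c I n₀ h h') x)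
              = ∏ j : Fin n, iotaLoc₂ K c I hmap n₀ h h' n j (x j)) ∧
          Function.Bijective Ψ) ∧
      IsDomain (Bpp0 K c I n₀ h h') ∧
      (∀ n : ℕ, ∀ P ∈ minimalPrimes (Bpp K c I hmap n₀ h h' n),
        Ideal.comap (structMap₂ K c I hmap n₀ h h' n) P = ⊥) := by
  exact shift_theorem_strengthening_general hmap (hrad n₀) hh hiso
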